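/- Let κ : [0,∞) → [1,∞) be a monotone increasing concave function with κ(t)/t → 0 as t → ∞. For any D₀ > 0, there exist constants D₁, D₂ > 0 depending only on D₀ and κ such that for all points x, y in a metric space X with basepoint o: if d(x,y) ≤ D₀·κ(d(o,x)), then D₁·κ(d(o,x)) ≤ κ(d(o,y)) ≤ D₂·κ(d(o,x)). -/

import Mathlib

open Filter

/-- A concave function on `[0, ∞)` with `0 ≤ f 0` satisfies `c f(r) ≤ f(c r)` for `c ∈ [0, 1]`. -/
theorem ConcaveOn.mul_le_apply_mul {f : ℝ → ℝ} (hf : ConcaveOn ℝ (Set.Ici 0) f) (h0 : 0 ≤ f 0)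
    {c r : ℝ} (hc : 0 ≤ c) (hc1 : c ≤ 1) (hr : 0 ≤ r) : c * f r ≤ f (c * r) := by
  have h := hf.2 (Set.mem_Ici.2 hr) (Set.mem_Ici.2 le_rfl) hc (sub_nonneg.2 hc1) (by ring)
  simp only [smul_eq_mul, mul_zero, add_zero] at h
  linarith [mul_nonneg (sub_nonneg.2 hc1) h0]

/-- A concave function on `[0, ∞)` with `0 ≤ f 0` satisfies `f(l t) ≤ l f(t)` for `1 ≤ l`. -/
theorem ConcaveOn.apply_mul_le_mul {f : ℝ → ℝ} (hf : ConcaveOn ℝ (Set.Ici 0) f) (h0 : 0 ≤ f 0)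
    {l t : ℝ} (hl : 1 ≤ l) (ht : 0 ≤ t) : f (l * t) ≤ l * f t := by
  have hl0 : 0 < l := one_pos.trans_le hl
  have h := hf.mul_le_apply_mul h0 (inv_nonneg.2 hl0.le) (inv_le_one_of_one_le₀ hl)
    (mul_nonneg hl0.le ht)
  rw [inv_mul_cancel_left₀ hl0.ne'] at h
  exact (inv_mul_le_iff₀ hl0).1 h

/-- A concave function on `[0, ∞)` with `0 ≤ f 0` is subadditive. -/
theorem ConcaveOn.apply_add_le_add {f : ℝ → ℝ} (hf : ConcaveOn ℝ (Set.Ici 0) f) (h0 : 0 ≤ f 0)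
    {s u : ℝ} (hs : 0 ≤ s) (hu : 0 ≤ u) : f (s + u) ≤ f s + f u := by
  rcases (add_nonneg hs hu).eq_or_lt with h | h
  · obtain rfl : s = 0 := by linarith
    simpa using h0
  · have h1 := hf.mul_le_apply_mul h0 (div_nonneg hs h.le)
      ((div_le_one h).2 (by linarith)) h.le
    have h2 := hf.mul_le_apply_mul h0 (div_nonneg hu h.le)
      ((div_le_one h).2 (by linarith)) h.le
    rw [div_mul_cancel₀ _ h.ne'] at h1 h2
    have h3 : s / (s + u) * f (s + u) + u / (s + u) * f (s + u) = f (s + u) := by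
      field_simp
    linarith

/-- Lemma 3.2 of Qing–Rafi–Tiozzo: for a sublinear function κ (monotone increasing,
concave, κ ≥ 1, κ(t)/t → 0) and any D₀ > 0 there are D₁, D₂ > 0 depending only on
D₀ and κ such that in any metric space with basepoint o, if d(x,y) ≤ D₀·κ(d(o,x))
then D₁·κ(d(o,x)) ≤ κ(d(o,y)) ≤ D₂·κ(d(o,x)). -/
theorem stmt0 (κ : ℝ → ℝ)
    (hmono : MonotoneOn κ (Set.Ici 0))
    (hconc : ConcaveOn ℝ (Set.Ici 0) κ)
    (hge : ∀ t, 0 ≤ t → 1 ≤ κ t)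
    (hsub : Tendsto (fun t => κ t / t) atTop (nhds 0))
    (D₀ : ℝ) (hD₀ : 0 < D₀) :
    ∃ D₁ > (0:ℝ), ∃ D₂ > (0:ℝ), ∀ (X : Type) [MetricSpace X] (o x y : X),
      dist x y ≤ D₀ * κ (dist o x) →
      D₁ * κ (dist o x) ≤ κ (dist o y) ∧ κ (dist o y) ≤ D₂ * κ (dist o x) := by
  have h0 : 0 ≤ κ 0 := zero_le_one.trans (hge 0 le_rfl)
  obtain ⟨T, hT0, hT⟩ : ∃ T : ℝ, 0 < T ∧ ∀ t, T ≤ t → D₀ * κ t ≤ t / 2 := by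
    have hlt := hsub.eventually (gt_mem_nhds (show (0 : ℝ) < 1 / (2 * D₀) by positivity))
    obtain ⟨T, hT⟩ := eventually_atTop.1 hlt
    refine ⟨max T 1, by positivity, fun t ht => ?_⟩
    have ht0 : 0 < t := one_pos.trans_le ((le_max_right _ _).trans ht)
    have h := hT t ((le_max_left _ _).trans ht)
    rw [div_lt_div_iff₀ ht0 (by positivity)] at h
    linarith
  have hκT := hge T hT0.le
  have hκD := hge D₀ hD₀.le
  refine ⟨(2 + κ T)⁻¹, by positivity, 1 + κ D₀, by positivity, ?_⟩
  intro X _ o x y hxy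
  have ha : 0 ≤ dist o x := dist_nonneg
  have hb : 0 ≤ dist o y := dist_nonneg
  have hκa := hge _ ha
  have hκb := hge _ hb
  have hab : dist o y ≤ dist o x + dist x y := dist_triangle o x y
  have hba : dist o x ≤ dist o y + dist x y := dist_comm y x ▸ dist_triangle o y x
  have hu : 0 ≤ κ (dist o x) * D₀ := by positivity
  constructor
  · rw [inv_mul_le_iff₀ (by positivity)]
    rcases le_total T (dist o x) with h | h
    · have h1 := hT _ h
      have h2 : κ (dist o x) ≤ κ (2 * dist o y) :=
        hmono ha (Set.mem_Ici.2 (by positivity)) (by linarith)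
      have h3 := hconc.apply_mul_le_mul h0 one_le_two hb
      nlinarith
    · have h1 : κ (dist o x) ≤ κ T := hmono ha hT0.le h
      nlinarith
  · have h1 : κ (dist o y) ≤ κ (dist o x + κ (dist o x) * D₀) :=
      hmono hb (Set.mem_Ici.2 (add_nonneg ha hu)) (by linarith)
    have h2 := hconc.apply_add_le_add h0 ha hu
    have h3 := hconc.apply_mul_le_mul h0 hκa hD₀.le
    linarith
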